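/- Let C be a category with pullbacks and let X be an object of C. Then X is formally unramified if and only if, for every Beck module φ: M → Y in C, the map Hom_C(X, M) → Hom_C(X, Y) given by composition with φ is bijective. -/

import Mathlib

open CategoryTheory CategoryTheory.Limits

universe v u

/-- A Beck module over `Y`: an abelian group object in the overcategory `C/Y`,
presented by its underlying morphism `φ : M ⟶ Y`, a unit (zero) section `unit`,
an addition `add` over `Y`, and a negation `neg` over `Y`, satisfying the abelian
group axioms on generalized elements (equivalently, via Yoneda, making it an
abelian group object of `C/Y`). -/
structure BeckModule {C : Type u} [Category.{v} C] [HasPullbacks C] (Y : C) where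
  M : C
  φ : M ⟶ Y
  unit : Y ⟶ M
  unit_φ : unit ≫ φ = 𝟙 Y
  add : pullback φ φ ⟶ M
  add_φ : add ≫ φ = pullback.fst φ φ ≫ φ
  neg : M ⟶ M
  neg_φ : neg ≫ φ = φ
  add_assoc : ∀ {T : C} (a b c : T ⟶ M) (hab : a ≫ φ = b ≫ φ) (hbc : b ≫ φ = c ≫ φ),
    pullback.lift (pullback.lift a b hab ≫ add) c
        (by rw [Category.assoc, add_φ, ← Category.assoc, pullback.lift_fst, hab, hbc]) ≫ add =
      pullback.lift a (pullback.lift b c hbc ≫ add)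
        (by rw [Category.assoc, add_φ, ← Category.assoc, pullback.lift_fst, hab]) ≫ add
  add_comm : ∀ {T : C} (a b : T ⟶ M) (h : a ≫ φ = b ≫ φ),
    pullback.lift a b h ≫ add = pullback.lift b a h.symm ≫ add
  zero_add : ∀ {T : C} (a : T ⟶ M),
    pullback.lift (a ≫ φ ≫ unit) a
        (by rw [Category.assoc, Category.assoc, unit_φ, Category.comp_id]) ≫ add = a
  add_neg : ∀ {T : C} (a : T ⟶ M),
    pullback.lift a (a ≫ neg) (by rw [Category.assoc, neg_φ]) ≫ add = a ≫ φ ≫ unit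

/-- A Beck torsor structure on `γ : Z ⟶ Y`: `γ` is an effective epimorphism, equipped
with a Beck module `mod` over `Y` and a group action `τ : M ×_Y Z ⟶ Z` in `C/Y`
(satisfying the unit and associativity axioms for an action of the group object `M`),
such that the shear morphism `(τ, π_Z) : M ×_Y Z ⟶ Z ×_Y Z` is an isomorphism in `C/Y`. -/
structure BeckTorsor {C : Type u} [Category.{v} C] [HasPullbacks C] {Z Y : C} (γ : Z ⟶ Y) where
  mod : BeckModule Y
  effEpi : EffectiveEpi γ
  τ : pullback mod.φ γ ⟶ Z
  τ_γ : τ ≫ γ = pullback.snd mod.φ γ ≫ γ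
  act_unit : ∀ {T : C} (z : T ⟶ Z),
    pullback.lift (z ≫ γ ≫ mod.unit) z
        (by rw [Category.assoc, Category.assoc, mod.unit_φ, Category.comp_id]) ≫ τ = z
  act_assoc : ∀ {T : C} (a b : T ⟶ mod.M) (z : T ⟶ Z)
      (hab : a ≫ mod.φ = b ≫ mod.φ) (hbz : b ≫ mod.φ = z ≫ γ),
    pullback.lift (pullback.lift a b hab ≫ mod.add) z
        (by rw [Category.assoc, mod.add_φ, ← Category.assoc, pullback.lift_fst, hab, hbz]) ≫ τ =
      pullback.lift a (pullback.lift b z hbz ≫ τ)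
        (by rw [Category.assoc, τ_γ, ← Category.assoc, pullback.lift_snd, hab, hbz]) ≫ τ
  shear_iso : IsIso (pullback.lift τ (pullback.snd mod.φ γ) τ_γ :
    pullback mod.φ γ ⟶ pullback γ γ)

/-- An object `X` is formally unramified if, for every Beck torsor `γ : Z ⟶ Y` in `C`,
the canonical map `Hom(X, Z) → Hom(X, Y)` given by composition with `γ` is injective. -/
def FormallyUnramified {C : Type u} [Category.{v} C] [HasPullbacks C] (X : C) : Prop :=
  ∀ ⦃Z Y : C⦄ (γ : Z ⟶ Y), BeckTorsor γ →
    Function.Injective (fun ψ : X ⟶ Z => ψ ≫ γ)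

section Helpers

variable {C : Type u} [Category.{v} C] [HasPullbacks C] {Y : C} (N : BeckModule Y)

theorem BeckModule.add_zero_aux {T : C} (a b : T ⟶ N.M) (h : a ≫ N.φ = b ≫ N.φ)
    (w : a ≫ N.φ = (b ≫ N.φ ≫ N.unit) ≫ N.φ) :
    pullback.lift a (b ≫ N.φ ≫ N.unit) w ≫ N.add = a := by
  rw [N.add_comm]
  have e : b ≫ N.φ ≫ N.unit = a ≫ N.φ ≫ N.unit := by
    rw [← Category.assoc, ← h, Category.assoc]
  simp only [e]
  exact N.zero_add a

theorem BeckModule.lift_add_φ {T : C} (a b : T ⟶ N.M) (h : a ≫ N.φ = b ≫ N.φ) :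
    (pullback.lift a b h ≫ N.add) ≫ N.φ = b ≫ N.φ := by
  rw [Category.assoc, N.add_φ, ← Category.assoc, pullback.lift_fst, h]

theorem BeckModule.add_add_neg {T : C} (a b : T ⟶ N.M) (h : a ≫ N.φ = b ≫ N.φ)
    (w : (pullback.lift a b h ≫ N.add) ≫ N.φ = (b ≫ N.neg) ≫ N.φ) :
    pullback.lift (pullback.lift a b h ≫ N.add) (b ≫ N.neg) w ≫ N.add = a := by
  rw [N.add_assoc a b (b ≫ N.neg) h (by rw [Category.assoc, N.neg_φ])]
  simp only [N.add_neg]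
  exact N.add_zero_aux a b h _

theorem BeckModule.add_neg_add {T : C} (a b : T ⟶ N.M) (h : a ≫ N.φ = b ≫ N.φ)
    (h' : a ≫ N.φ = (b ≫ N.neg) ≫ N.φ)
    (w : (pullback.lift a (b ≫ N.neg) h' ≫ N.add) ≫ N.φ = b ≫ N.φ) :
    pullback.lift (pullback.lift a (b ≫ N.neg) h' ≫ N.add) b w ≫ N.add = a := by
  rw [N.add_assoc a (b ≫ N.neg) b h' (by rw [Category.assoc, N.neg_φ])]
  simp only [N.add_comm (b ≫ N.neg) b, N.add_neg]
  exact N.add_zero_aux a b h _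

theorem BeckModule.sub_cond : pullback.fst N.φ N.φ ≫ N.φ = (pullback.snd N.φ N.φ ≫ N.neg) ≫ N.φ := by
  rw [Category.assoc, N.neg_φ, pullback.condition]

theorem BeckModule.shear_isIso (w : N.add ≫ N.φ = pullback.snd N.φ N.φ ≫ N.φ) :
    IsIso (pullback.lift N.add (pullback.snd N.φ N.φ) w :
      pullback N.φ N.φ ⟶ pullback N.φ N.φ) := by
  have hadd : N.add = pullback.lift (pullback.fst N.φ N.φ) (pullback.snd N.φ N.φ)
      pullback.condition ≫ N.add := by simp
  have w2 : (pullback.lift (pullback.fst N.φ N.φ) (pullback.snd N.φ N.φ ≫ N.neg)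
      N.sub_cond ≫ N.add) ≫ N.φ = pullback.snd N.φ N.φ ≫ N.φ := by
    rw [N.lift_add_φ, Category.assoc, N.neg_φ]
  have comp : ∀ {S T : C} (f : S ⟶ T) (a b : T ⟶ N.M) (h : a ≫ N.φ = b ≫ N.φ),
      f ≫ pullback.lift a b h = pullback.lift (f ≫ a) (f ≫ b) (by simp [h]) := by
    intros
    apply pullback.hom_ext <;> simp [pullback.lift_fst, pullback.lift_snd]
  refine ⟨pullback.lift _ _ w2, ?_, ?_⟩
  · apply pullback.hom_ext
    · rw [Category.assoc, pullback.lift_fst, ← Category.assoc, comp, Category.id_comp]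
      simp only [pullback.lift_fst, pullback.lift_snd_assoc]
      have := N.add_add_neg (pullback.fst N.φ N.φ) (pullback.snd N.φ N.φ) pullback.condition
        (by rw [N.lift_add_φ, Category.assoc, N.neg_φ])
      simp only [← hadd] at this
      exact this
    · simp [pullback.lift_fst, pullback.lift_snd]
  · apply pullback.hom_ext
    · rw [Category.assoc, pullback.lift_fst, Category.id_comp]
      exact N.add_neg_add _ _ pullback.condition _ _
    · simp [pullback.lift_fst, pullback.lift_snd]

/-- A Beck module is a torsor over itself. -/
noncomputable def BeckModule.trivialTorsor : BeckTorsor N.φ where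
  mod := N
  effEpi := by
    have : IsSplitEpi N.φ := ⟨⟨⟨N.unit, N.unit_φ⟩⟩⟩
    infer_instance
  τ := N.add
  τ_γ := by rw [N.add_φ, pullback.condition]
  act_unit z := N.zero_add z
  act_assoc a b z hab hbz := N.add_assoc a b z hab hbz
  shear_iso := N.shear_isIso _

end Helpers

/-- Theorem 3.3: `X` is formally unramified if and only if, for every Beck module
`φ : M ⟶ Y` in `C`, composition with `φ` is a bijection `Hom(X, M) → Hom(X, Y)`. -/
theorem formallyUnramified_iff_beckModule_bijective {C : Type u} [Category.{v} C]
    [HasPullbacks C] (X : C) :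
    FormallyUnramified X ↔
      ∀ ⦃Y : C⦄ (N : BeckModule Y),
        Function.Bijective (fun ψ : X ⟶ N.M => ψ ≫ N.φ) := by
  constructor
  · intro h Y N
    refine ⟨h N.φ N.trivialTorsor, fun f => ⟨f ≫ N.unit, ?_⟩⟩
    simp [N.unit_φ]
  · intro h Z Y γ t ψ₁ ψ₂ e
    dsimp only at e
    have := t.shear_iso
    let s := pullback.lift t.τ (pullback.snd t.mod.φ γ) t.τ_γ
    let p : X ⟶ pullback t.mod.φ γ := pullback.lift ψ₁ ψ₂ e ≫ inv s
    have hp : p ≫ s = pullback.lift ψ₁ ψ₂ e := by simp [p, s]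
    have h1 : p ≫ t.τ = ψ₁ := by
      have := congrArg (· ≫ pullback.fst γ γ) hp
      simpa [s, pullback.lift_fst, pullback.lift_snd] using this
    have h2 : p ≫ pullback.snd t.mod.φ γ = ψ₂ := by
      have := congrArg (· ≫ pullback.snd γ γ) hp
      simpa [s, pullback.lift_fst, pullback.lift_snd] using this
    have h3 : p ≫ pullback.fst t.mod.φ γ = ψ₂ ≫ γ ≫ t.mod.unit := by
      apply (h t.mod).1
      simp [t.mod.unit_φ, pullback.condition, reassoc_of% h2]
    have h4 := t.act_unit ψ₂
    rw [← h4, ← h1]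
    congr 1
    apply pullback.hom_ext
    · simp [h3, pullback.lift_fst, pullback.lift_snd]
    · simp [h2, pullback.lift_fst, pullback.lift_snd]
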